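/- Let m, n be positive integers, A ∈ M_{n,m}(𝔽_q((z⁻¹))) non-degenerate, and let (y_k)_{k≥1} be the sequence of best approximations related to Aᵀ. If ‖y_k‖^{1/k} tends to infinity as k → ∞, then for every ε with 0 < ε < q^{−4−m/n}, the set Bad^ε(A) has Hausdorff dimension n. -/

import Mathlib

/-!
Common setup: the field `𝔽_q((z⁻¹))` of formal power series over a finite field `K` of
cardinality `q`, modeled as the field `FF K` of formal Laurent series in `t = z⁻¹`,
together with its non-Archimedean norm, the embedding of the polynomial ring `𝔽_q[z]`,
distances to polynomial (vectors), Diophantine exponents, `Bad` sets, continued fractions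
and best approximation sequences.
-/

open scoped Classical ENNReal NNReal
open Filter

noncomputable section

set_option linter.unusedSectionVars false

namespace FPSDA

variable (K : Type*) [Field K] [Fintype K]

/-- The field `𝔽_q((z⁻¹))` of formal power series in `z⁻¹` over the finite field `K = 𝔽_q`,
modeled as the field of formal Laurent series in the variable `t = z⁻¹`. -/
def FF : Type _ := LaurentSeries K

instance : Field (FF K) := inferInstanceAs (Field (LaurentSeries K))

variable {K}

/-- The identity map, viewing an element of `𝔽_q((z⁻¹))` as a Laurent series in `t = z⁻¹`. -/
def toL (x : FF K) : LaurentSeries K := x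

@[simp] lemma toL_zero : toL (0 : FF K) = 0 := rfl
@[simp] lemma toL_add (x y : FF K) : toL (x + y) = toL x + toL y := rfl
@[simp] lemma toL_neg (x : FF K) : toL (-x) = -toL x := rfl
@[simp] lemma toL_sub (x y : FF K) : toL (x - y) = toL x - toL y := rfl
lemma toL_eq_zero {x : FF K} : toL x = 0 ↔ x = 0 := Iff.rfl

/-- The norm `‖x‖ = q ^ (deg x)` on `𝔽_q((z⁻¹))`, where
`deg x = - (order of x as a Laurent series in z⁻¹)`; `‖0‖ = 0`. -/
def fnorm (x : FF K) : ℝ :=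
  if toL x = 0 then 0 else (Fintype.card K : ℝ) ^ (-(toL x).order)

lemma one_le_q : (1 : ℝ) ≤ (Fintype.card K : ℝ) := by
  exact_mod_cast Fintype.card_pos

lemma fnorm_nonneg (x : FF K) : 0 ≤ fnorm x := by
  unfold fnorm
  split_ifs
  · exact le_refl 0
  · exact zpow_nonneg (by positivity) _

lemma fnorm_eq_zero {x : FF K} : fnorm x = 0 ↔ x = 0 := by
  unfold fnorm
  split_ifs with h
  · exact ⟨fun _ => toL_eq_zero.mp h, fun _ => rfl⟩
  · constructor
    · intro hc
      exact absurd hc (zpow_ne_zero _ (by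
        have h0 : (0:ℝ) < (Fintype.card K : ℝ) := by positivity
        exact ne_of_gt h0))
    · intro hc
      exact absurd (toL_eq_zero.mpr hc) h

lemma fnorm_neg (x : FF K) : fnorm (-x) = fnorm x := by
  unfold fnorm
  rw [toL_neg]
  simp [neg_eq_zero, HahnSeries.order_neg]

lemma fnorm_add_le (x y : FF K) : fnorm (x + y) ≤ max (fnorm x) (fnorm y) := by
  by_cases hxy : x + y = 0
  · rw [fnorm_eq_zero.mpr hxy]
    exact le_max_of_le_left (fnorm_nonneg x)
  by_cases hx : x = 0
  · rw [hx, zero_add]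
    exact le_max_right _ _
  by_cases hy : y = 0
  · rw [hy, add_zero]
    exact le_max_left _ _
  have horder : min (toL x).order (toL y).order ≤ (toL (x + y)).order := by
    rw [toL_add]
    exact HahnSeries.min_order_le_order_add (show toL x + toL y ≠ 0 from hxy)
  have h1 : fnorm (x + y) = (Fintype.card K : ℝ) ^ (-(toL (x+y)).order) := by
    unfold fnorm
    rw [if_neg (show toL (x + y) ≠ 0 from hxy)]
  rcases le_total (toL x).order (toL y).order with h | h
  · have h2 : (toL x).order ≤ (toL (x+y)).order := le_trans (by simp [min_eq_left h]) horder
    refine le_max_of_le_left ?_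
    rw [h1]
    unfold fnorm
    rw [if_neg (show toL x ≠ 0 from hx)]
    exact zpow_le_zpow_right₀ one_le_q (by omega)
  · have h2 : (toL y).order ≤ (toL (x+y)).order := le_trans (by simp [min_eq_right h]) horder
    refine le_max_of_le_right ?_
    rw [h1]
    unfold fnorm
    rw [if_neg (show toL y ≠ 0 from hy)]
    exact zpow_le_zpow_right₀ one_le_q (by omega)

/-- The (ultra)metric `dist x y = ‖x - y‖` on `𝔽_q((z⁻¹))`. -/
instance : MetricSpace (FF K) where
  dist x y := fnorm (x - y)
  dist_self x := by
    show fnorm (x - x) = 0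
    rw [sub_self]
    exact fnorm_eq_zero.mpr rfl
  dist_comm x y := by
    show fnorm (x - y) = fnorm (y - x)
    have h : x - y = -(y - x) := by ring
    rw [h, fnorm_neg]
  dist_triangle x y z := by
    show fnorm (x - z) ≤ fnorm (x - y) + fnorm (y - z)
    have h : x - z = (x - y) + (y - z) := by ring
    calc fnorm (x - z) ≤ max (fnorm (x - y)) (fnorm (y - z)) := by
          rw [h]; exact fnorm_add_le _ _
      _ ≤ fnorm (x - y) + fnorm (y - z) :=
        max_le (le_add_of_nonneg_right (fnorm_nonneg _)) (le_add_of_nonneg_left (fnorm_nonneg _))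
  eq_of_dist_eq_zero := by
    intro x y h
    have h' : x - y = 0 := fnorm_eq_zero.mp h
    exact sub_eq_zero.mp h'

instance : MeasurableSpace (FF K) := borel _
instance : BorelSpace (FF K) := ⟨rfl⟩

/-- The canonical embedding of the polynomial ring `𝔽_q[z]` into `𝔽_q((z⁻¹))`:
the variable `z` is sent to `t⁻¹ = single (-1) 1`. -/
def polyF (P : Polynomial K) : FF K :=
  Polynomial.aeval (HahnSeries.single (-1 : ℤ) (1 : K)) P

/-- Supremum norm of a vector with entries in `𝔽_q((z⁻¹))`. -/
def vnorm {ι : Type*} [Fintype ι] (v : ι → FF K) : ℝ := ⨆ i, fnorm (v i)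

/-- `⟨v⟩`, the distance from the vector `v` to the nearest polynomial vector. -/
def vdist {ι : Type*} [Fintype ι] (v : ι → FF K) : ℝ :=
  ⨅ y : ι → Polynomial K, vnorm (fun i => v i - polyF (y i))

/-- `⟨x⟩`, the distance from the scalar `x` to the nearest polynomial. -/
def sdist (x : FF K) : ℝ := ⨅ y : Polynomial K, fnorm (x - polyF y)

/-- The fractional part `{x} = Σ_{i ≥ 1} a_i z^{-i}` of `x = Σ_i a_i z^{-i}`. -/
def fracPart (x : FF K) : FF K :=
  (⟨fun i => if 1 ≤ i then (toL x).coeff i else 0, (toL x).isPWO_support'.mono (by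
      intro i hi
      by_cases h : (1:ℤ) ≤ i
      · simpa [Function.mem_support, h] using hi
      · simp [Function.mem_support, h] at hi)⟩ : LaurentSeries K)

/-- The integer part `[x] = Σ_{i ≤ 0} a_i z^{-i}` of `x = Σ_i a_i z^{-i}`, as a polynomial
in `z`. -/
def intPoly (x : FF K) : Polynomial K :=
  ∑ i ∈ Finset.range ((-(toL x).order).toNat + 1),
    Polynomial.monomial i ((toL x).coeff (-(i : ℤ)))

/-- `x ∈ 𝔽_q((z⁻¹))` is irrational if it is not in `𝔽_q(z)`, i.e. is not a ratio of two
polynomials in `z`. -/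
def FIrrational (x : FF K) : Prop :=
  ∀ P Q : Polynomial K, Q ≠ 0 → x * polyF Q ≠ polyF P

section Exponents

variable {m n : ℕ}

/-- The norm `‖x‖ = max_j ‖x_j‖` of a polynomial vector `x`. -/
def pnorm {ι : Type*} [Fintype ι] (x : ι → Polynomial K) : ℝ :=
  vnorm (fun i => (polyF (x i) : FF K))

/-- The system `⟨A x - θ⟩ ≤ H^{-ω}`, `‖x‖ ≤ H` has a polynomial solution `x`. -/
def Solv (A : Matrix (Fin n) (Fin m) (FF K)) (θ : Fin n → FF K) (ω H : ℝ) : Prop :=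
  ∃ x : Fin m → Polynomial K,
    vdist (A.mulVec (fun j => polyF (x j)) - θ) ≤ H ^ (-ω) ∧ pnorm x ≤ H

/-- The system `⟨A x⟩ ≤ H^{-ω}`, `‖x‖ ≤ H` has a nonzero polynomial solution `x`. -/
def SolvHom (A : Matrix (Fin n) (Fin m) (FF K)) (ω H : ℝ) : Prop :=
  ∃ x : Fin m → Polynomial K, x ≠ 0 ∧
    vdist (A.mulVec (fun j => polyF (x j))) ≤ H ^ (-ω) ∧ pnorm x ≤ H

/-- The inhomogeneous exponent `ω(A, θ)`: the supremum (in `[0,∞]`) of all `ω` such that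
for arbitrarily large `H` the system `⟨A x - θ⟩ ≤ H^{-ω}`, `‖x‖ ≤ H` has a polynomial
solution. -/
def omegaInhom (A : Matrix (Fin n) (Fin m) (FF K)) (θ : Fin n → FF K) : ℝ≥0∞ :=
  ⨆ (ω : ℝ) (_ : ∀ H₀ : ℝ, ∃ H : ℝ, H₀ ≤ H ∧ Solv A θ ω H), ENNReal.ofReal ω

/-- The uniform inhomogeneous exponent `ω̂(A, θ)`: as `ω(A, θ)`, but with a solution for
all sufficiently large `H`. -/
def omegaHatInhom (A : Matrix (Fin n) (Fin m) (FF K)) (θ : Fin n → FF K) : ℝ≥0∞ :=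
  ⨆ (ω : ℝ) (_ : ∃ H₀ : ℝ, ∀ H : ℝ, H₀ ≤ H → Solv A θ ω H), ENNReal.ofReal ω

/-- The homogeneous exponent `ω(A)`. -/
def omegaHom (A : Matrix (Fin n) (Fin m) (FF K)) : ℝ≥0∞ :=
  ⨆ (ω : ℝ) (_ : ∀ H₀ : ℝ, ∃ H : ℝ, H₀ ≤ H ∧ SolvHom A ω H), ENNReal.ofReal ω

/-- The uniform homogeneous exponent `ω̂(A)`. -/
def omegaHatHom (A : Matrix (Fin n) (Fin m) (FF K)) : ℝ≥0∞ :=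
  ⨆ (ω : ℝ) (_ : ∃ H₀ : ℝ, ∀ H : ℝ, H₀ ≤ H → SolvHom A ω H), ENNReal.ofReal ω

/-- `A` is non-degenerate: the `𝔽_q[z]`-module `Aᵀ 𝔽_q[z]ⁿ + 𝔽_q[z]^m ⊆ 𝔽_q((z⁻¹))^m` has
rank `m + n` over `𝔽_q[z]`, i.e. its `m + n` natural generators are linearly independent
over `𝔽_q[z]`; equivalently, no nonzero polynomial vector `u` makes `Aᵀ u` a polynomial
vector. -/
def Nondegenerate (A : Matrix (Fin n) (Fin m) (FF K)) : Prop :=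
  ∀ u : Fin n → Polynomial K,
    (∃ v : Fin m → Polynomial K,
      A.transpose.mulVec (fun i => polyF (u i)) = fun j => polyF (v j)) → u = 0

/-- `liminf_{x ∈ 𝔽_q[z]^m, ‖x‖ → ∞} ‖x‖^{m/n} ⟨A x - θ⟩`, computed in `[0, ∞]`. -/
def badLiminf (A : Matrix (Fin n) (Fin m) (FF K)) (θ : Fin n → FF K) : ℝ≥0∞ :=
  Filter.liminf
    (fun x : Fin m → Polynomial K =>
      ENNReal.ofReal ((pnorm x) ^ ((m : ℝ) / (n : ℝ)) *
        vdist (A.mulVec (fun j => polyF (x j)) - θ)))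
    (Filter.comap (fun x : Fin m → Polynomial K => pnorm x) Filter.atTop)

/-- The set `Bad^ε(A)` of `θ` in the unit polydisc `𝕀ⁿ` with
`liminf_{‖x‖ → ∞} ‖x‖^{m/n} ⟨A x - θ⟩ ≥ ε`. -/
def Bad (A : Matrix (Fin n) (Fin m) (FF K)) (ε : ℝ) : Set (Fin n → FF K) :=
  {θ | (∀ i, fnorm (θ i) < 1) ∧ ENNReal.ofReal ε ≤ badLiminf A θ}

/-- The set `Bad(A) = ⋃_{ε > 0} Bad^ε(A)`. -/
def BadAll (A : Matrix (Fin n) (Fin m) (FF K)) : Set (Fin n → FF K) :=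
  ⋃ (ε : ℝ) (_ : 0 < ε), Bad A ε

/-- `M(y) = ⟨Aᵀ y⟩` for a polynomial vector `y`. -/
def Mfun (A : Matrix (Fin n) (Fin m) (FF K)) (y : Fin n → Polynomial K) : ℝ :=
  vdist (A.transpose.mulVec (fun i => polyF (y i)))

/-- `y 1, y 2, …` is a sequence of best approximations related to `Aᵀ`:
`1 = Y_1 < Y_2 < ⋯`, `M_1 > M_2 > ⋯`, and `M(x) ≥ M_k` for every nonzero polynomial
vector `x` with `‖x‖ < Y_{k+1}` (the value `y 0` is irrelevant). -/
def IsBestApproxSeq (A : Matrix (Fin n) (Fin m) (FF K))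
    (y : ℕ → Fin n → Polynomial K) : Prop :=
  pnorm (y 1) = 1 ∧
  (∀ k, 1 ≤ k → pnorm (y k) < pnorm (y (k + 1))) ∧
  (∀ k, 1 ≤ k → Mfun A (y (k + 1)) < Mfun A (y k)) ∧
  (∀ k, 1 ≤ k → ∀ x : Fin n → Polynomial K, x ≠ 0 → pnorm x < pnorm (y (k + 1)) →
    Mfun A (y k) ≤ Mfun A x)

end Exponents

section Scalar

/-- The system `⟨ξ x - θ⟩ ≤ H^{-ω}`, `‖x‖ ≤ H` has a polynomial solution `x`. -/
def sSolv (ξ θ : FF K) (ω H : ℝ) : Prop :=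
  ∃ x : Polynomial K, sdist (ξ * polyF x - θ) ≤ H ^ (-ω) ∧ fnorm (polyF x) ≤ H

/-- The scalar inhomogeneous exponent `ω((ξ), θ)`. -/
def somegaInhom (ξ θ : FF K) : ℝ≥0∞ :=
  ⨆ (ω : ℝ) (_ : ∀ H₀ : ℝ, ∃ H : ℝ, H₀ ≤ H ∧ sSolv ξ θ ω H), ENNReal.ofReal ω

/-- The scalar uniform inhomogeneous exponent `ω̂((ξ), θ)`. -/
def somegaHatInhom (ξ θ : FF K) : ℝ≥0∞ :=
  ⨆ (ω : ℝ) (_ : ∃ H₀ : ℝ, ∀ H : ℝ, H₀ ≤ H → sSolv ξ θ ω H), ENNReal.ofReal ω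

/-- The scalar homogeneous exponent `ω((ξ))`. -/
def somegaHom (ξ : FF K) : ℝ≥0∞ :=
  ⨆ (ω : ℝ) (_ : ∀ H₀ : ℝ, ∃ H : ℝ, H₀ ≤ H ∧ ∃ x : Polynomial K, x ≠ 0 ∧
      sdist (ξ * polyF x) ≤ H ^ (-ω) ∧ fnorm (polyF x) ≤ H), ENNReal.ofReal ω

/-- `liminf_{x ∈ 𝔽_q[z], ‖x‖ → ∞} ‖x‖ ⟨α x - θ⟩`, computed in `[0, ∞]`. -/
def sBadLiminf (α θ : FF K) : ℝ≥0∞ :=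
  Filter.liminf
    (fun x : Polynomial K => ENNReal.ofReal (fnorm (polyF x) * sdist (α * polyF x - θ)))
    (Filter.comap (fun x : Polynomial K => fnorm (polyF x)) Filter.atTop)

/-- The set `Bad^ε(α)` of `θ ∈ 𝕀` with `liminf_{‖x‖ → ∞} ‖x‖ ⟨α x - θ⟩ ≥ ε`. -/
def sBad (α : FF K) (ε : ℝ) : Set (FF K) :=
  {θ | fnorm θ < 1 ∧ ENNReal.ofReal ε ≤ sBadLiminf α θ}

end Scalar

section CF

/-- The Gauss map `T x = 1/x - [1/x]` on `𝔽_q((z⁻¹))`. -/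
def gaussMap (x : FF K) : FF K := fracPart x⁻¹

/-- `pquot α k` is the `(k+1)`-st partial quotient `A_{k+1} = [1 / T^k α]` of the
continued fraction expansion of `α`. -/
def pquot (α : FF K) (k : ℕ) : Polynomial K := intPoly ((gaussMap^[k] α)⁻¹)

/-- `cfQ α k` is the denominator `Q_k` of the `k`-th convergent of the continued fraction
expansion of `α`: `Q_0 = 1`, `Q_1 = A_1`, `Q_{k+2} = A_{k+2} Q_{k+1} + Q_k`. -/
def cfQ (α : FF K) : ℕ → Polynomial K
  | 0 => 1
  | 1 => pquot α 0
  | (k + 2) => pquot α (k + 1) * cfQ α (k + 1) + cfQ α k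

/-- `α` is singular on average: for every `c > 0` the proportion of `l ∈ {1, …, N}` for
which `‖{Q α}‖ ≤ c 2^{-l}` has a solution `Q ∈ 𝔽_q[z]` with `0 < ‖Q‖ ≤ 2^l` tends to `1`
as `N → ∞`. -/
def SingularOnAverage (α : FF K) : Prop :=
  ∀ c : ℝ, 0 < c →
    Filter.Tendsto
      (fun N : ℕ =>
        (((Finset.Icc 1 N).filter (fun l : ℕ =>
            ∃ Q : Polynomial K, Q ≠ 0 ∧ fnorm (polyF Q) ≤ 2 ^ l ∧
              fnorm (fracPart (polyF Q * α)) ≤ c / 2 ^ l)).card : ℝ) / (N : ℝ))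
      Filter.atTop (nhds 1)

end CF

end FPSDA

open FPSDA MeasureTheory

namespace FPSDA
variable {K : Type*} [Field K] [Fintype K]

def cf (x : FF K) (i : ℤ) : K := (toL x).coeff i

lemma cf_zero (i : ℤ) : cf (0 : FF K) i = 0 := rfl
lemma cf_add (x y : FF K) (i : ℤ) : cf (x + y) i = cf x i + cf y i := rfl
lemma cf_sub (x y : FF K) (i : ℤ) : cf (x - y) i = cf x i - cf y i := rfl
lemma cf_sum {ι : Type*} (s : Finset ι) (f : ι → FF K) (i : ℤ) :
    cf (∑ j ∈ s, f j) i = ∑ j ∈ s, cf (f j) i := by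
  induction s using Finset.induction_on with
  | empty => simp [cf_zero]
  | insert a s ha ih => rw [Finset.sum_insert ha, Finset.sum_insert ha, cf_add, ih]

lemma cf_ext {x y : FF K} (h : ∀ i, cf x i = cf y i) : x = y := by
  have : toL x = toL y := by
    ext i; exact h i
  exact this

lemma one_lt_q : (1 : ℝ) < (Fintype.card K : ℝ) := by
  exact_mod_cast Fintype.one_lt_card

lemma q_pos : (0 : ℝ) < (Fintype.card K : ℝ) := lt_trans one_pos one_lt_q

lemma fnorm_le_iff (x : FF K) (N : ℤ) :
    fnorm x ≤ (Fintype.card K : ℝ) ^ (-N) ↔ ∀ i < N, cf x i = 0 := by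
  by_cases hx : x = 0
  · subst hx
    simp only [cf_zero, implies_true, iff_true]
    rw [fnorm_eq_zero.mpr rfl]
    exact (zpow_pos q_pos _).le
  · have hx' : toL x ≠ 0 := hx
    unfold fnorm
    rw [if_neg hx', zpow_le_zpow_iff_right₀ one_lt_q, neg_le_neg_iff,
      HahnSeries.le_order_iff_forall hx']
    rfl

lemma fnorm_lt_iff (x : FF K) (N : ℤ) :
    fnorm x < (Fintype.card K : ℝ) ^ (-N) ↔ ∀ i ≤ N, cf x i = 0 := by
  have h : fnorm x < (Fintype.card K : ℝ) ^ (-N) ↔ fnorm x ≤ (Fintype.card K : ℝ) ^ (-(N+1)) := by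
    by_cases hx : toL x = 0
    · simp only [fnorm, hx, if_true]
      simp [zpow_pos q_pos, (zpow_pos q_pos _).le]
    · simp only [fnorm, hx, if_false]
      rw [zpow_le_zpow_iff_right₀ one_lt_q, zpow_lt_zpow_iff_right₀ one_lt_q]
      omega
  rw [h, fnorm_le_iff]
  simp only [Int.lt_add_one_iff]

lemma fnorm_mul (x y : FF K) : fnorm (x * y) = fnorm x * fnorm y := by
  by_cases hx : x = 0
  · subst hx; rw [zero_mul, fnorm_eq_zero.mpr rfl, zero_mul]
  by_cases hy : y = 0
  · subst hy; rw [mul_zero, fnorm_eq_zero.mpr rfl, mul_zero]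
  have hxy : x * y ≠ 0 := mul_ne_zero hx hy
  have hx' : toL x ≠ 0 := hx
  have hy' : toL y ≠ 0 := hy
  have hxy' : toL (x * y) ≠ 0 := hxy
  unfold fnorm
  rw [if_neg hx', if_neg hy', if_neg hxy', ← zpow_add₀ q_pos.ne']
  congr 1
  have : (toL (x * y)).order = (toL x).order + (toL y).order :=
    HahnSeries.order_mul hx' hy'
  rw [this]; ring

lemma fnorm_sum_lt {ι : Type*} (s : Finset ι) (f : ι → FF K) {c : ℝ} (hc : 0 < c)
    (h : ∀ j ∈ s, fnorm (f j) < c) : fnorm (∑ j ∈ s, f j) < c := by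
  induction s using Finset.induction_on with
  | empty => simpa [fnorm_eq_zero.mpr] using hc
  | insert a s ha ih =>
    rw [Finset.sum_insert ha]
    refine (fnorm_add_le _ _).trans_lt (max_lt (h a (by simp)) (ih ?_))
    intro j hj; exact h j (by simp [hj])

def polyHom : Polynomial K →+* FF K :=
  (Polynomial.aeval (HahnSeries.single (-1 : ℤ) (1 : K) : LaurentSeries K)).toRingHom

lemma polyF_eq (P : Polynomial K) : polyF P = polyHom P := rfl

lemma polyF_monomial_mul (a : ℕ) (c : K) (x : FF K) (i : ℤ) :
    cf (polyF (Polynomial.monomial a c) * x) i = c * cf x (i + a) := by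
  have h1 : polyF (Polynomial.monomial a c) = (HahnSeries.single (-(a:ℤ)) c : LaurentSeries K) := by
    have : Polynomial.aeval (HahnSeries.single (-1 : ℤ) (1 : K) : LaurentSeries K)
        (Polynomial.monomial a c) = (HahnSeries.single (-(a:ℤ)) c : LaurentSeries K) := by
      have h0 : algebraMap K (LaurentSeries K) c = HahnSeries.single (0:ℤ) c := by
        simp [RingHom.algebraMap_toAlgebra, HahnSeries.C_apply]
      rw [Polynomial.aeval_monomial, HahnSeries.single_pow, h0, HahnSeries.single_mul_single]
      simp
    exact this
  have h2 : cf (polyF (Polynomial.monomial a c) * x) i =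
     ((HahnSeries.single (-(a:ℤ)) c : LaurentSeries K) * toL x).coeff i := by rw [h1]; rfl
  rw [h2]
  have := HahnSeries.coeff_single_mul_add (r := c) (x := toL x) (a := i + a) (b := -(a:ℤ))
  rw [show i + (a:ℤ) + -(a:ℤ) = i by ring] at this
  rw [this]; rfl

lemma cf_polyF_mul (P : Polynomial K) (x : FF K) (i : ℤ) {D : ℕ} (hD : P.natDegree < D) :
    cf (polyF P * x) i = ∑ a ∈ Finset.range D, P.coeff a * cf x (i + a) := by
  conv_lhs => rw [P.as_sum_range' D hD, polyF_eq, map_sum, Finset.sum_mul, cf_sum]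
  refine Finset.sum_congr rfl fun a _ => ?_
  rw [← polyF_eq, polyF_monomial_mul]

lemma cf_one (i : ℤ) : cf (1 : FF K) i = if i = 0 then 1 else 0 := by
  have : cf (1 : FF K) i = (1 : LaurentSeries K).coeff i := rfl
  rw [this, HahnSeries.coeff_one]
  split_ifs <;> rfl

lemma cf_polyF_pos (P : Polynomial K) (i : ℤ) (hi : 0 < i) : cf (polyF P) i = 0 := by
  rw [← mul_one (polyF P), cf_polyF_mul P 1 i (Nat.lt_succ_self _)]
  refine Finset.sum_eq_zero fun a _ => ?_
  rw [cf_one, if_neg (by omega), mul_zero]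

lemma cf_polyF_nonpos (P : Polynomial K) (a : ℕ) : cf (polyF P) (-(a:ℤ)) = P.coeff a := by
  rw [← mul_one (polyF P), cf_polyF_mul P 1 _ (D := max (P.natDegree+1) (a+1)) (by omega)]
  rw [Finset.sum_eq_single a]
  · rw [cf_one]; simp
  · intro b _ hb
    rw [cf_one, if_neg (by omega), mul_zero]
  · intro h
    exact absurd (Finset.mem_range.mpr (by omega)) h

lemma fnorm_polyF {P : Polynomial K} (hP : P ≠ 0) :
    fnorm (polyF P) = (Fintype.card K : ℝ) ^ (P.natDegree : ℤ) := by
  apply le_antisymm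
  · have := (fnorm_le_iff (polyF P) (-(P.natDegree:ℤ))).2 (by
      intro i hi
      obtain ⟨a, rfl⟩ : ∃ a : ℕ, i = -(a:ℤ) := ⟨(-i).toNat, by omega⟩
      rw [cf_polyF_nonpos]
      exact Polynomial.coeff_eq_zero_of_natDegree_lt (by omega))
    simpa using this
  · by_contra h
    push Not at h
    have := (fnorm_lt_iff (polyF P) (-(P.natDegree:ℤ))).1 (by simpa using h) _ le_rfl
    rw [cf_polyF_nonpos] at this
    exact hP (Polynomial.leadingCoeff_eq_zero.mp this)

/-- existence of integer parts -/
lemma exists_intPart (x : FF K) : ∃ P : Polynomial K, ∀ a : ℕ, P.coeff a = cf x (-(a:ℤ)) := by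
  refine ⟨∑ i ∈ Finset.range ((-(toL x).order).toNat + 1),
    Polynomial.monomial i ((toL x).coeff (-(i : ℤ))), fun a => ?_⟩
  rw [Polynomial.finsetSum_coeff]
  simp only [Polynomial.coeff_monomial]
  rw [Finset.sum_ite_eq' ]
  split_ifs with h
  · rfl
  · simp at h
    symm
    apply HahnSeries.coeff_eq_zero_of_lt_order
    omega

section vec
variable {ι : Type*} [Fintype ι] [Nonempty ι]

lemma fnorm_le_vnorm (v : ι → FF K) (i : ι) : fnorm (v i) ≤ vnorm v :=
  le_ciSup (f := fun i => fnorm (v i)) (Set.finite_range _).bddAbove i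

lemma vnorm_nonneg (v : ι → FF K) : 0 ≤ vnorm v := Real.iSup_nonneg fun _ => fnorm_nonneg _

lemma vdist_lt {v : ι → FF K} {c : ℝ} (h : vdist v < c) :
    ∃ y : ι → Polynomial K, ∀ i, fnorm (v i - polyF (y i)) < c := by
  obtain ⟨y, hy⟩ := exists_lt_of_ciInf_lt h
  exact ⟨y, fun i => (fnorm_le_vnorm (fun i => v i - polyF (y i)) i).trans_lt hy⟩

lemma vdist_le_of {v : ι → FF K} {N : ℤ} (hN : ∀ j, ∀ i : ℤ, 1 ≤ i → i < N → cf (v j) i = 0) :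
    vdist v ≤ (Fintype.card K : ℝ) ^ (-N) := by
  choose P hP using fun j => exists_intPart (v j)
  refine (ciInf_le ⟨0, ?_⟩ P).trans ?_
  · rintro _ ⟨y, rfl⟩; exact vnorm_nonneg _
  · refine ciSup_le fun j => ?_
    rw [fnorm_le_iff]
    intro i hi
    rw [cf_sub]
    rcases le_or_gt i 0 with h | h
    · obtain ⟨a, rfl⟩ : ∃ a : ℕ, i = -(a:ℤ) := ⟨(-i).toNat, by omega⟩
      rw [cf_polyF_nonpos, hP, sub_self]
    · rw [cf_polyF_pos _ _ h, hN j i h hi, sub_zero]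

lemma vdist_nonneg (v : ι → FF K) : 0 ≤ vdist v := Real.iInf_nonneg fun _ => vnorm_nonneg _

lemma pnorm_zero : pnorm (0 : ι → Polynomial K) = 0 := by
  have : (fun i => (polyF ((0 : ι → Polynomial K) i) : FF K)) = fun _ => 0 := by
    funext i; simp [polyF_eq]
  unfold pnorm vnorm
  simp [polyF_eq, fnorm_eq_zero.mpr]

def pdeg (x : ι → Polynomial K) : ℕ := Finset.univ.sup fun i => (x i).natDegree

lemma natDegree_le_pdeg (x : ι → Polynomial K) (i : ι) : (x i).natDegree ≤ pdeg x :=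
  Finset.le_sup (f := fun i => (x i).natDegree) (Finset.mem_univ i)

lemma pnorm_le_pdeg (x : ι → Polynomial K) : pnorm x ≤ (Fintype.card K : ℝ) ^ (pdeg x : ℤ) := by
  refine ciSup_le fun i => ?_
  show fnorm (polyF (x i)) ≤ _
  by_cases h : x i = 0
  · rw [h]; simp only [polyF_eq, map_zero, fnorm_eq_zero.mpr]
    exact (zpow_pos q_pos _).le
  · rw [fnorm_polyF h]
    apply zpow_le_zpow_right₀ one_le_q
    exact_mod_cast natDegree_le_pdeg x i

lemma exists_pdeg {x : ι → Polynomial K} (hx : x ≠ 0) :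
    ∃ i, x i ≠ 0 ∧ (x i).natDegree = pdeg x := by
  obtain ⟨i, -, hi⟩ := Finset.exists_mem_eq_sup Finset.univ Finset.univ_nonempty
    (fun i => (x i).natDegree)
  by_cases h0 : x i = 0
  · obtain ⟨j, hj⟩ := Function.ne_iff.mp hx
    refine ⟨j, hj, ?_⟩
    have h1 := natDegree_le_pdeg x j
    have h2 : pdeg x = 0 := by unfold pdeg; rw [hi, h0]; simp
    omega
  · exact ⟨i, h0, hi.symm⟩

lemma pnorm_eq {x : ι → Polynomial K} (hx : x ≠ 0) :
    pnorm x = (Fintype.card K : ℝ) ^ (pdeg x : ℤ) := by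
  refine le_antisymm (pnorm_le_pdeg x) ?_
  obtain ⟨i, h0, hi⟩ := exists_pdeg hx
  rw [← hi, ← fnorm_polyF h0]
  exact fnorm_le_vnorm (fun i => (polyF (x i) : FF K)) i

end vec
end FPSDA
namespace FPSDA
variable {K : Type*} [Field K] [Fintype K] {m n : ℕ}

lemma fnorm_polyF_le {ι : Type*} [Fintype ι] [Nonempty ι] (x : ι → Polynomial K) (i : ι) :
    fnorm (polyF (x i)) ≤ (Fintype.card K : ℝ) ^ (pdeg x : ℤ) :=
  (fnorm_le_vnorm (fun i => (polyF (x i) : FF K)) i).trans (pnorm_le_pdeg x)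

lemma dirichlet (A : Matrix (Fin n) (Fin m) (FF K)) (h l : ℕ) (hl : m * l < n * h) :
    ∃ w : Fin n → Polynomial K, w ≠ 0 ∧ pdeg w < h ∧
      ∀ j, ∀ i : ℤ, 1 ≤ i → i < (l:ℤ) + 1 →
        cf (A.transpose.mulVec (fun i => polyF (w i)) j) i = 0 := by
  let T : Matrix (Fin m × Fin l) (Fin n × Fin h) K :=
    fun js ia => cf (A ia.1 js.1) ((js.2 : ℕ) + 1 + (ia.2 : ℕ) : ℤ)
  have hker : LinearMap.ker T.mulVecLin ≠ ⊥ := by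
    apply LinearMap.ker_ne_bot_of_finrank_lt
    simpa using hl
  obtain ⟨c, hc, hc0⟩ := Submodule.exists_mem_ne_zero_of_ne_bot hker
  have hcoef : ∀ i (b : ℕ), (∑ a : Fin h, Polynomial.monomial (a : ℕ) (c (i, a))).coeff b =
      if hb : b < h then c (i, ⟨b, hb⟩) else 0 := by
    intro i b
    rw [Polynomial.finsetSum_coeff]
    simp only [Polynomial.coeff_monomial]
    split_ifs with hb
    · rw [Finset.sum_eq_single ⟨b, hb⟩]
      · simp
      · intro a _ ha
        rw [if_neg]; intro h'; exact ha (Fin.ext h')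
      · simp
    · refine Finset.sum_eq_zero fun a _ => if_neg ?_
      have := a.2; omega
  have hpos : 0 < h := by
    rcases Nat.eq_zero_or_pos h with h0 | h0
    · subst h0; simp at hl
    · exact h0
  have hdeg : ∀ i, (∑ a : Fin h, Polynomial.monomial (a : ℕ) (c (i, a))).natDegree < h := by
    intro i
    have : (∑ a : Fin h, Polynomial.monomial (a : ℕ) (c (i, a))).natDegree ≤ h - 1 := by
      rw [Polynomial.natDegree_le_iff_coeff_eq_zero]
      intro N hN
      rw [hcoef, dif_neg (by omega)]
    omega
  refine ⟨fun i => ∑ a : Fin h, Polynomial.monomial (a : ℕ) (c (i, a)), ?_, ?_, ?_⟩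
  · intro h0
    apply hc0
    funext ⟨i, a⟩
    have h1 := hcoef i a
    have h2 := congrFun h0 i
    rw [h2] at h1
    simpa using h1.symm
  · unfold pdeg
    rw [Finset.sup_lt_iff (by simpa using hpos)]
    intro i _
    exact hdeg i
  · intro j s hs1 hs2
    obtain ⟨s, rfl⟩ : ∃ t : ℕ, s = (t:ℤ) + 1 := ⟨(s-1).toNat, by omega⟩
    have hs : s < l := by omega
    have h1 := congrFun (show T.mulVec c = 0 from hc) (j, ⟨s, hs⟩)
    simp only [Matrix.mulVec, dotProduct, Pi.zero_apply, Fintype.sum_prod_type] at h1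
    simp only [Matrix.mulVec, dotProduct, Matrix.transpose_apply]
    rw [cf_sum, ← h1]
    refine Finset.sum_congr rfl fun i _ => ?_
    rw [mul_comm, cf_polyF_mul _ _ _ (hdeg i), Finset.sum_range]
    refine Finset.sum_congr rfl fun a _ => ?_
    rw [hcoef, dif_pos a.2, mul_comm]

lemma key (hm : 0 < m) (hn : 0 < n) (A : Matrix (Fin n) (Fin m) (FF K)) (θ : Fin n → FF K)
    (y : Fin n → Polynomial K) (x : Fin m → Polynomial K)
    (h1 : Mfun A y < (Fintype.card K : ℝ) ^ (-(1 + pdeg x : ℤ)))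
    (h2 : vdist (A.mulVec (fun j => polyF (x j)) - θ) < (Fintype.card K : ℝ) ^ (-(1 + pdeg y : ℤ))) :
    cf (∑ i, polyF (y i) * θ i) 1 = 0 := by
  have : Nonempty (Fin m) := ⟨⟨0, hm⟩⟩
  have : Nonempty (Fin n) := ⟨⟨0, hn⟩⟩
  obtain ⟨r, hr⟩ := vdist_lt h1
  obtain ⟨p, hp⟩ := vdist_lt h2
  have hid : ∑ i, polyF (y i) * θ i =
      ∑ j, (A.transpose.mulVec (fun i => polyF (y i)) j - polyF (r j)) * polyF (x j)
      + polyF (∑ j, r j * x j - ∑ i, y i * p i)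
      - ∑ i, polyF (y i) * ((A.mulVec (fun j => polyF (x j)) - θ) i - polyF (p i)) := by
    have hcomm : ∑ j, A.transpose.mulVec (fun i => polyF (y i)) j * polyF (x j)
        = ∑ i, polyF (y i) * A.mulVec (fun j => polyF (x j)) i := by
      simp only [Matrix.mulVec, dotProduct, Matrix.transpose_apply, Finset.sum_mul,
        Finset.mul_sum]
      rw [Finset.sum_comm]
      refine Finset.sum_congr rfl fun i _ => Finset.sum_congr rfl fun j _ => ?_
      ring
    simp only [polyF_eq, map_sub, map_sum, map_mul] at *
    simp only [sub_mul, mul_sub, Pi.sub_apply, Finset.sum_sub_distrib]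
    rw [hcomm]
    ring
  have hbound : ∀ (a b : FF K) (D : ℕ), fnorm a < (Fintype.card K : ℝ) ^ (-(1 + D : ℤ)) →
      fnorm b ≤ (Fintype.card K : ℝ) ^ (D : ℤ) → fnorm (a * b) < (Fintype.card K : ℝ) ^ (-1 : ℤ) := by
    intro a b D ha hb
    rw [fnorm_mul]
    have : (Fintype.card K : ℝ) ^ (-1 : ℤ) =
      (Fintype.card K : ℝ) ^ (-(1 + D : ℤ)) * (Fintype.card K : ℝ) ^ (D : ℤ) := by
      rw [← zpow_add₀ q_pos.ne']; congr 1; ring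
    rw [this]
    calc fnorm a * fnorm b ≤ fnorm a * (Fintype.card K : ℝ) ^ (D : ℤ) :=
          mul_le_mul_of_nonneg_left hb (fnorm_nonneg _)
      _ < _ := mul_lt_mul_of_pos_right ha (zpow_pos q_pos _)
  have hq : (0:ℝ) < (Fintype.card K : ℝ) ^ (-1 : ℤ) := zpow_pos q_pos _
  rw [hid, cf_sub, cf_add, cf_polyF_pos _ 1 one_pos]
  rw [(fnorm_lt_iff _ 1).1 (fnorm_sum_lt _ _ hq
    (fun j _ => hbound _ _ _ (hr j) (fnorm_polyF_le x j))) 1 le_rfl]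
  rw [(fnorm_lt_iff _ 1).1 (fnorm_sum_lt _ _ hq
    (fun i _ => by
      rw [mul_comm]; exact hbound _ _ _ (hp i) (fnorm_polyF_le y i))) 1 le_rfl]
  simp

lemma y_ne (hn : 0 < n) {A : Matrix (Fin n) (Fin m) (FF K)} {y : ℕ → Fin n → Polynomial K}
    (hy : IsBestApproxSeq A y) : ∀ k, 1 ≤ k → y k ≠ 0 := by
  have : Nonempty (Fin n) := ⟨⟨0, hn⟩⟩
  intro k hk h0
  rcases Nat.lt_or_ge 1 k with h | h
  · have := hy.2.1 (k-1) (by omega)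
    rw [Nat.sub_add_cancel hk, h0, pnorm_zero] at this
    exact absurd this (not_lt.mpr (vnorm_nonneg _))
  · obtain rfl : k = 1 := by omega
    have := hy.1
    rw [h0, pnorm_zero] at this
    norm_num at this

lemma pdeg_one (hn : 0 < n) {A : Matrix (Fin n) (Fin m) (FF K)} {y : ℕ → Fin n → Polynomial K}
    (hy : IsBestApproxSeq A y) : pdeg (y 1) = 0 := by
  have : Nonempty (Fin n) := ⟨⟨0, hn⟩⟩
  have := hy.1
  rw [pnorm_eq (y_ne hn hy 1 le_rfl)] at this
  rw [← zpow_zero (Fintype.card K : ℝ)] at this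
  have := zpow_right_injective₀ q_pos one_lt_q.ne' this
  exact_mod_cast this

lemma pdeg_lt (hn : 0 < n) {A : Matrix (Fin n) (Fin m) (FF K)} {y : ℕ → Fin n → Polynomial K}
    (hy : IsBestApproxSeq A y) (k : ℕ) (hk : 1 ≤ k) : pdeg (y k) < pdeg (y (k+1)) := by
  have : Nonempty (Fin n) := ⟨⟨0, hn⟩⟩
  have := hy.2.1 k hk
  rw [pnorm_eq (y_ne hn hy k hk), pnorm_eq (y_ne hn hy (k+1) (by omega)),
    zpow_lt_zpow_iff_right₀ one_lt_q] at this
  exact_mod_cast this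

lemma pdeg_ge (hn : 0 < n) {A : Matrix (Fin n) (Fin m) (FF K)} {y : ℕ → Fin n → Polynomial K}
    (hy : IsBestApproxSeq A y) (k : ℕ) : k ≤ pdeg (y (k+1)) := by
  induction k with
  | zero => simp
  | succ k ih => have := pdeg_lt hn hy (k+1) (by omega); omega

lemma best_bound (hm : 0 < m) (hn : 0 < n) {A : Matrix (Fin n) (Fin m) (FF K)}
    {y : ℕ → Fin n → Polynomial K}
    (hy : IsBestApproxSeq A y) (k : ℕ) (hk : 1 ≤ k) (X : ℕ)
    (hM : (Fintype.card K : ℝ) ^ (-(1 + X : ℤ)) ≤ Mfun A (y k)) :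
    n * pdeg (y (k+1)) ≤ m * (1 + X) := by
  have : Nonempty (Fin m) := ⟨⟨0, hm⟩⟩
  have : Nonempty (Fin n) := ⟨⟨0, hn⟩⟩
  by_contra hlt
  push Not at hlt
  obtain ⟨w, hw0, hwd, hw⟩ := dirichlet A _ _ hlt
  have h1 : Mfun A w ≤ (Fintype.card K : ℝ) ^ (-((1 + X : ℕ) + 1 : ℤ)) := vdist_le_of hw
  have h2 := hy.2.2.2 k hk w hw0 (by
    rw [pnorm_eq hw0, pnorm_eq (y_ne hn hy (k+1) (by omega)), zpow_lt_zpow_iff_right₀ one_lt_q]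
    exact_mod_cast hwd)
  have h3 := (hM.trans h2).trans h1
  rw [zpow_le_zpow_iff_right₀ one_lt_q] at h3
  push_cast at h3
  omega

lemma exists_k (hm : 0 < m) (hn : 0 < n) {A : Matrix (Fin n) (Fin m) (FF K)}
    {y : ℕ → Fin n → Polynomial K}
    (hy : IsBestApproxSeq A y) (X : ℕ) :
    ∃ k, 1 ≤ k ∧ Mfun A (y k) < (Fintype.card K : ℝ) ^ (-(1 + X : ℤ)) ∧
      n * pdeg (y k) ≤ m * (1 + X) := by
  have hex : ∃ k, 1 ≤ k ∧ Mfun A (y k) < (Fintype.card K : ℝ) ^ (-(1 + X : ℤ)) := by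
    by_contra h
    push Not at h
    have h1 := best_bound hm hn hy (m * (1 + X) + 1) (by omega) X (h _ (by omega))
    have h2 := pdeg_ge hn hy (m * (1 + X) + 1)
    nlinarith
  classical
  obtain ⟨h1, h2⟩ := Nat.find_spec hex
  refine ⟨Nat.find hex, h1, h2, ?_⟩
  rcases Nat.lt_or_ge 1 (Nat.find hex) with h | h
  · have h3 := Nat.find_min hex (m := Nat.find hex - 1) (by omega)
    push Not at h3
    have := best_bound hm hn hy (Nat.find hex - 1) (by omega) X (h3 (by omega))
    rwa [Nat.sub_add_cancel h1] at this
  · have : Nat.find hex = 1 := by omega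
    rw [this, pdeg_one hn hy]; simp

lemma mem_Bad (hm : 0 < m) (hn : 0 < n) {A : Matrix (Fin n) (Fin m) (FF K)}
    {y : ℕ → Fin n → Polynomial K}
    (hy : IsBestApproxSeq A y) {ε : ℝ} 
    (hε : ε < (Fintype.card K : ℝ) ^ (-(4 : ℝ) - (m : ℝ) / (n : ℝ)))
    {θ : Fin n → FF K} (hθ : ∀ i, fnorm (θ i) < 1)
    (h : ∀ k, 1 ≤ k → cf (∑ i, polyF (y k i) * θ i) 1 ≠ 0) : θ ∈ Bad A ε := by
  have : Nonempty (Fin m) := ⟨⟨0, hm⟩⟩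
  have : Nonempty (Fin n) := ⟨⟨0, hn⟩⟩
  refine ⟨hθ, ?_⟩
  unfold badLiminf
  refine Filter.le_liminf_of_le (by isBoundedDefault) ?_
  rw [Filter.eventually_comap]
  filter_upwards [Filter.eventually_gt_atTop (0:ℝ)] with b hb x hx
  apply ENNReal.ofReal_le_ofReal
  have hx0 : x ≠ 0 := by
    rintro rfl; rw [pnorm_zero] at hx; linarith
  obtain ⟨k, hk, hM, hd⟩ := exists_k hm hn hy (pdeg x)
  have hv : (Fintype.card K : ℝ) ^ (-(1 + pdeg (y k) : ℤ)) ≤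
      vdist (A.mulVec (fun j => polyF (x j)) - θ) := by
    by_contra hlt
    exact h k hk (key hm hn A θ (y k) x hM (not_le.mp hlt))
  refine hε.le.trans ?_
  rw [pnorm_eq hx0]
  refine le_trans ?_ (mul_le_mul_of_nonneg_left hv (Real.rpow_nonneg (zpow_pos q_pos _).le _))
  rw [← Real.rpow_intCast, ← Real.rpow_intCast, ← Real.rpow_mul q_pos.le, ← Real.rpow_add q_pos]
  apply Real.rpow_le_rpow_of_exponent_le one_le_q
  push_cast
  have hn' : (0:ℝ) < n := by exact_mod_cast hn
  have hd' : (n:ℝ) * pdeg (y k) ≤ m * (1 + pdeg x) := by exact_mod_cast hd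
  have : (pdeg (y k) : ℝ) ≤ m / n * (1 + pdeg x) := by
    rw [div_mul_eq_mul_div, le_div_iff₀ hn']; linarith
  nlinarith

end FPSDA
namespace FPSDA
variable {K : Type*} [Field K] [Fintype K] {m n : ℕ}

lemma dimH_le_of_cover {X : Type*} [EMetricSpace X] (s : Set X) (n : ℕ) (q : ℕ) (hq : 1 < q)
    {ι : ℕ → Type*} [∀ N, Fintype (ι N)] (hι : ∀ N, Fintype.card (ι N) = (q ^ N) ^ n)
    (t : ∀ N : ℕ, ι N → Set X)
    (ht : ∀ N, ∀ i, Metric.ediam (t N i) ≤ ((q : ℝ≥0∞)⁻¹) ^ N)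
    (hst : ∀ N, s ⊆ ⋃ i, t N i) : dimH s ≤ n := by
  borelize X
  have h1 : μH[(n:ℝ)] s ≤ liminf (fun N => ∑ i, Metric.ediam (t N i) ^ (n:ℝ)) atTop := by
    refine Measure.hausdorffMeasure_le_liminf_sum (n:ℝ) s (fun N => ((q : ℝ≥0∞)⁻¹) ^ N) ?_ t
      (Eventually.of_forall ht) (Eventually.of_forall hst)
    apply ENNReal.tendsto_pow_atTop_nhds_zero_of_lt_one
    rw [ENNReal.inv_lt_one]
    exact_mod_cast hq
  have h2 : ∀ N, ∑ i, Metric.ediam (t N i) ^ (n:ℝ) ≤ 1 := by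
    intro N
    calc ∑ i, Metric.ediam (t N i) ^ (n:ℝ) ≤ ∑ i : ι N, (((q : ℝ≥0∞)⁻¹) ^ N) ^ n := by
          refine Finset.sum_le_sum fun i _ => ?_
          rw [ENNReal.rpow_natCast]
          gcongr
          exact ht N i
      _ = ((q : ℝ≥0∞) ^ N * ((q : ℝ≥0∞)⁻¹) ^ N) ^ n := by
          rw [Finset.sum_const, Finset.card_univ, hι, nsmul_eq_mul, mul_pow]
          push_cast; rfl
      _ ≤ 1 := by
          rw [← mul_pow, ENNReal.mul_inv_cancel (by simp; omega) (by simp)]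
          simp
  have h3 : μH[(n:ℝ)] s ≤ 1 := h1.trans (by
    refine (liminf_le_liminf (v := fun _ => (1:ℝ≥0∞)) (Eventually.of_forall h2)).trans ?_
    simp)
  have := dimH_le_of_hausdorffMeasure_ne_top (s := s) (d := (n : ℝ≥0)) (by
    rw [NNReal.coe_natCast]
    exact ne_top_of_le_ne_top ENNReal.one_ne_top h3)
  simpa using this

lemma edist_le_of_cf {θ θ' : Fin n → FF K} {N : ℕ}
    (h : ∀ i, ∀ a : ℤ, a < N → cf (θ i) a = cf (θ' i) a) :
    edist θ θ' ≤ ((Fintype.card K : ℝ≥0∞)⁻¹) ^ N := by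
  rw [edist_pi_le_iff]
  intro i
  have h1 : dist (θ i) (θ' i) ≤ (Fintype.card K : ℝ) ^ (-(N:ℤ)) := by
    show fnorm (θ i - θ' i) ≤ _
    rw [fnorm_le_iff]
    intro a ha
    rw [cf_sub, h i a ha, sub_self]
  rw [edist_dist]
  refine (ENNReal.ofReal_le_ofReal h1).trans ?_
  rw [zpow_neg, zpow_natCast, ENNReal.ofReal_inv_of_pos (pow_pos q_pos _),
    ENNReal.ofReal_pow q_pos.le, ENNReal.ofReal_natCast, ENNReal.inv_pow]

lemma cf_of_fnorm_lt_one {x : FF K} (h : fnorm x < 1) : ∀ i ≤ (0:ℤ), cf x i = 0 :=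
  (fnorm_lt_iff x 0).1 (by simpa using h)

lemma dimH_unit_le : dimH {θ : Fin n → FF K | ∀ i, fnorm (θ i) < 1} ≤ n := by
  refine dimH_le_of_cover _ n (Fintype.card K) Fintype.one_lt_card
    (ι := fun N => Fin n → Fin N → K) (by intro N; simp)
    (fun N c => {θ | (∀ i, fnorm (θ i) < 1) ∧ ∀ i, ∀ a : Fin N, cf (θ i) ((a:ℕ)+1 : ℤ) = c i a})
    ?_ ?_
  · intro N c
    refine Metric.ediam_le fun θ hθ θ' hθ' => edist_le_of_cf ?_
    intro i a ha
    rcases le_or_gt a 0 with h | h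
    · rw [cf_of_fnorm_lt_one (hθ.1 i) a h, cf_of_fnorm_lt_one (hθ'.1 i) a h]
    · obtain ⟨b, rfl⟩ : ∃ b : ℕ, a = (b:ℤ) + 1 := ⟨(a-1).toNat, by omega⟩
      have e1 := hθ.2 i ⟨b, by omega⟩
      have e2 := hθ'.2 i ⟨b, by omega⟩
      exact e1.trans e2.symm
  · intro N θ hθ
    exact Set.mem_iUnion.mpr ⟨fun i a => cf (θ i) ((a:ℕ)+1 : ℤ), hθ, fun _ _ => rfl⟩

end FPSDA
namespace FPSDA
variable {K : Type*} [Field K] [Fintype K] {m n : ℕ}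

lemma exists_rec {α : Type*} [Zero α] (F : ℕ → (ℕ → α) → α) :
    ∃ D : ℕ → α, ∀ N, D N = F N (fun M => if M < N then D M else 0) := by
  let P : ℕ → (ℕ → α) := fun N => Nat.rec (fun _ => 0) (fun N p => Function.update p N (F N p)) N
  have hs : ∀ N, P (N+1) = Function.update (P N) N (F N (P N)) := fun N => rfl
  have hP : ∀ N, P N = fun M => if M < N then P (M+1) M else 0 := by
    intro N
    induction N with
    | zero => funext M; simp [P]
    | succ N ih =>
      funext M
      rcases lt_trichotomy M N with h | h | h
      · rw [hs, Function.update_of_ne h.ne, if_pos (by omega), ih]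
        simp [h]
      · subst h; simp
      · rw [hs, Function.update_of_ne h.ne', if_neg (by omega), ih]
        simp; omega
  refine ⟨fun N => P (N+1) N, fun N => ?_⟩
  show P (N+1) N = _
  rw [← hP, hs, Function.update_self]

lemma exists_digits (d : ℕ → ℕ) (hd : Function.Injective d) (ix : ℕ → Fin n)
    (c : ℕ → Fin n → ℕ → K) (hc : ∀ k, c k (ix k) (d k) ≠ 0) (g : ℕ → Fin n → K) :
    ∃ D : ℕ → Fin n → K, (∀ N i, (∀ k, ¬ (d k = N ∧ ix k = i)) → D N i = g N i) ∧
      ∀ k, ∑ i, ∑ a ∈ Finset.range (d k + 1), c k i a * D a i = 1 := by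
  let v : ℕ → (ℕ → Fin n → K) → K := fun k p =>
    (1 - ∑ i, ∑ a ∈ Finset.range (d k), c k i a * p a i
      - ∑ i ∈ Finset.univ.erase (ix k), c k i (d k) * g (d k) i) / c k (ix k) (d k)
  obtain ⟨D, hD⟩ := exists_rec (α := Fin n → K) (fun N p =>
    if h : ∃ k, d k = N then Function.update (g N) (ix h.choose) (v h.choose p) else g N)
  have hk : ∀ k, D (d k) = Function.update (g (d k)) (ix k)
      (v k (fun M => if M < d k then D M else 0)) := by
    intro k
    have hex : ∃ k', d k' = d k := ⟨k, rfl⟩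
    have hch : hex.choose = k := hd hex.choose_spec
    rw [hD (d k), dif_pos hex, hch]
  refine ⟨D, ?_, ?_⟩
  · intro N i hN
    by_cases hex : ∃ k, d k = N
    · obtain ⟨k, rfl⟩ := hex
      rw [hk k, Function.update_of_ne]
      intro h; exact hN k ⟨rfl, h.symm⟩
    · rw [hD N, dif_neg hex]
  · intro k
    simp only [Finset.sum_range_succ, Finset.sum_add_distrib]
    rw [← Finset.add_sum_erase _ (fun x => c k x (d k) * D (d k) x) (Finset.mem_univ (ix k))]
    beta_reduce
    have h1 : ∑ i ∈ Finset.univ.erase (ix k), c k i (d k) * D (d k) i =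
        ∑ i ∈ Finset.univ.erase (ix k), c k i (d k) * g (d k) i := by
      refine Finset.sum_congr rfl fun i hi => ?_
      rw [hk k, Function.update_of_ne (Finset.ne_of_mem_erase hi)]
    have h2 : D (d k) (ix k) = v k (fun M => if M < d k then D M else 0) := by
      rw [hk k, Function.update_self]
    have h3 : ∑ i, ∑ a ∈ Finset.range (d k), c k i a * (if a < d k then D a else 0) i =
        ∑ i, ∑ a ∈ Finset.range (d k), c k i a * D a i := by
      refine Finset.sum_congr rfl fun i _ => Finset.sum_congr rfl fun a ha => ?_
      rw [if_pos (Finset.mem_range.mp ha)]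
    rw [h1, h2]
    simp only [v]
    rw [h3, mul_div_cancel₀ _ (hc k)]
    ring

lemma exists_FF (D : ℕ → K) : ∃ x : FF K, fnorm x < 1 ∧ ∀ a : ℕ, cf x ((a:ℤ) + 1) = D a := by
  let x : LaurentSeries K := HahnSeries.ofSuppBddBelow
    (fun i : ℤ => if 1 ≤ i then D (i-1).toNat else 0) ⟨1, by
      intro i hi
      by_contra h
      apply hi
      exact if_neg h⟩
  have hx : ∀ i, cf (x : FF K) i = if 1 ≤ i then D (i-1).toNat else 0 := fun i => rfl
  refine ⟨x, ?_, ?_⟩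
  · have := (fnorm_lt_iff (x : FF K) 0).2 (by
      intro i hi; rw [hx, if_neg (by omega)])
    simpa using this
  · intro a
    rw [hx, if_pos (by omega)]
    simp

section count
variable (hn : 0 < n) (d : ℕ → ℕ) (ix : ℕ → Fin n)

def colF (hn : 0 < n) (p : ℕ) : Fin n := ⟨p % n, Nat.mod_lt _ hn⟩

def freeP (hn : 0 < n) (d : ℕ → ℕ) (ix : ℕ → Fin n) (p : ℕ) : Prop :=
  ∀ k, ¬ (d k = p / n ∧ ix k = colF hn p)

lemma count_bound (C k0 : ℕ) (hC : 0 < C) (hd : ∀ k, k0 ≤ k → C * k ≤ d k) (N : ℕ) :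
    N * n ≤ Nat.count (freeP hn d ix) (N * n) + (k0 + N / C + 1) := by
  have h1 : Nat.count (freeP hn d ix) (N * n) +
      (Finset.filter (fun p => ¬ freeP hn d ix p) (Finset.range (N * n))).card = N * n := by
    rw [Nat.count_eq_card_filter_range, Finset.card_filter_add_card_filter_not, Finset.card_range]
  have h2 : (Finset.filter (fun p => ¬ freeP hn d ix p) (Finset.range (N * n))) ⊆
      (Finset.range (k0 + N / C + 1)).image (fun k => d k * n + (ix k : ℕ)) := by
    intro p hp
    rw [Finset.mem_filter, Finset.mem_range] at hp
    obtain ⟨hp1, hp2⟩ := hp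
    unfold freeP at hp2
    push Not at hp2
    obtain ⟨k, hk1, hk2⟩ := hp2
    rw [Finset.mem_image]
    refine ⟨k, ?_, ?_⟩
    · rw [Finset.mem_range]
      by_contra hk
      push Not at hk
      have h3 := hd k (by have := Nat.zero_le (N / C); generalize N / C = t at *; omega)
      have h4 : d k < N := by rw [hk1]; exact Nat.div_lt_of_lt_mul (by rwa [mul_comm])
      have h5 : k ≤ N / C := by
        rw [Nat.le_div_iff_mul_le hC, mul_comm]; omega
      omega
    · rw [hk1, hk2]
      show p / n * n + p % n = p
      rw [mul_comm]; exact Nat.div_add_mod p n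
  have h3 := (Finset.card_le_card h2).trans Finset.card_image_le
  rw [Finset.card_range] at h3
  calc N * n = _ := h1.symm
    _ ≤ _ := Nat.add_le_add_left h3 _

lemma free_infinite (k0 : ℕ) (hd : ∀ k, k0 ≤ k → 2 * k ≤ d k) :
    (Set.ofPred (freeP hn d ix)).Infinite := by
  intro hfin
  have h := fun N => count_bound hn d ix 2 k0 (by norm_num) hd N
  have hc : ∀ N, Nat.count (freeP hn d ix) N ≤ hfin.toFinset.card := by
    intro N
    rw [Nat.count_eq_card_filter_range]
    apply Finset.card_le_card
    intro p hp
    rw [Set.Finite.mem_toFinset]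
    exact (Finset.mem_filter.mp hp).2
  have h1 := h (2 * (hfin.toFinset.card + k0 + 2))
  have h2 := hc (2 * (hfin.toFinset.card + k0 + 2) * n)
  have h3 : 2 * (hfin.toFinset.card + k0 + 2) ≤ 2 * (hfin.toFinset.card + k0 + 2) * n :=
    Nat.le_mul_of_pos_right _ hn
  omega

def fmap (hn : 0 < n) (d : ℕ → ℕ) (ix : ℕ → Fin n) (θ : Fin n → FF K) : ℝ :=
  Real.ofDigits (fun j => Fintype.equivFin K
    (cf (θ (colF hn (Nat.nth (freeP hn d ix) j)))
      (((Nat.nth (freeP hn d ix) j / n : ℕ) : ℤ) + 1)))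

lemma fmap_close (θ θ' : Fin n → FF K) (N : ℕ)
    (h : ∀ i, ∀ a : ℕ, a < N → cf (θ i) ((a:ℤ)+1) = cf (θ' i) ((a:ℤ)+1)) :
    |fmap hn d ix θ - fmap hn d ix θ'| ≤
      ((Fintype.card K : ℝ) ^ (Nat.count (freeP hn d ix) (N * n)))⁻¹ := by
  apply Real.abs_ofDigits_sub_ofDigits_le
  intro j hj
  have := Nat.nth_lt_of_lt_count hj
  rw [h _ _ (Nat.div_lt_of_lt_mul (by rwa [mul_comm]))]

lemma fmap_holder (C k0 : ℕ) (hC : 2 ≤ C) (hd : ∀ k, k0 ≤ k → C * k ≤ d k) (r : ℝ≥0)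
    (hr : (r:ℝ) = n - 1 / C) :
    ∃ B : ℝ≥0, HolderOnWith B r (fmap (K := K) hn d ix) {θ | ∀ i, fnorm (θ i) < 1} := by
  set q : ℝ := (Fintype.card K : ℝ) with hq
  have q0 : 0 < q := q_pos
  have q1 : 1 < q := one_lt_q
  have hCr : (0:ℝ) < C := by exact_mod_cast (by omega : 0 < C)
  refine ⟨(q ^ ((n:ℝ) + k0 + 1 + r)).toNNReal, ?_⟩
  intro θ hθ θ' hθ'
  rcases eq_or_ne θ θ' with rfl | hne
  · simp
  have hpos : 0 < dist θ θ' := dist_pos.mpr hne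
  have hle : dist θ θ' ≤ 1 := by
    rw [dist_pi_le_iff zero_le_one]
    intro i
    show fnorm (θ i - θ' i) ≤ 1
    rw [sub_eq_add_neg]
    refine (fnorm_add_le _ _).trans (max_le (hθ i).le ?_)
    rw [fnorm_neg]; exact (hθ' i).le
  obtain ⟨N, hN1, hN2⟩ := exists_nat_pow_near_of_lt_one hpos hle (inv_pos.mpr q0)
    (inv_lt_one_of_one_lt₀ q1)
  have hclose := fmap_close hn d ix θ θ' (N-1) (by
    intro i a ha
    have h1 : fnorm (θ i - θ' i) ≤ q ^ (-(N:ℤ)) := by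
      have := (dist_le_pi_dist θ θ' i).trans hN2
      rwa [inv_pow, ← zpow_natCast, ← zpow_neg] at this
    rw [fnorm_le_iff] at h1
    have := h1 ((a:ℤ)+1) (by omega)
    rw [cf_sub] at this
    exact sub_eq_zero.mp this)
  have hcount := count_bound hn d ix C k0 (by omega) hd (N-1)
  set ct := Nat.count (freeP hn d ix) ((N-1) * n) with hct
  have hct' : (N:ℝ) * r - n - k0 - 1 ≤ ct := by
    have e1 : (((N-1 : ℕ) : ℝ)) * n ≤ ct + (k0 + (((N-1) / C : ℕ) : ℝ) + 1) := by
      exact_mod_cast hcount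
    have e2 : (((N-1) / C : ℕ) : ℝ) ≤ (N:ℝ) / C := by
      refine Nat.cast_div_le.trans ?_
      gcongr
      omega
    have e3 : (N:ℝ) - 1 ≤ ((N-1 : ℕ) : ℝ) := by
      rw [sub_le_iff_le_add]
      exact_mod_cast (by omega : N ≤ N - 1 + 1)
    have e4 : ((N:ℝ) - 1) * n ≤ ((N-1 : ℕ) : ℝ) * n := by gcongr
    rw [hr]
    have e5 : (N:ℝ) * (n - 1 / C) = N * n - N / C := by ring
    rw [e5]
    linarith
  have hreal : |fmap hn d ix θ - fmap hn d ix θ'| ≤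
      q ^ ((n:ℝ) + k0 + 1 + r) * dist θ θ' ^ (r:ℝ) := by
    have e1 : (q ^ ct)⁻¹ ≤ q ^ (-((N:ℝ) * r - n - k0 - 1)) := by
      rw [← Real.rpow_natCast, ← Real.rpow_neg q0.le]
      exact Real.rpow_le_rpow_of_exponent_le q1.le (by linarith)
    have e2 : q ^ (-((N:ℝ)+1) * r) ≤ dist θ θ' ^ (r:ℝ) := by
      rw [Real.rpow_mul q0.le]
      refine Real.rpow_le_rpow (Real.rpow_nonneg q0.le _) ?_ r.2
      rw [Real.rpow_neg q0.le]
      have : q ^ ((N:ℝ) + 1) = q ^ (N+1) := by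
        rw [← Real.rpow_natCast]; push_cast; rfl
      rw [this, ← inv_pow]
      exact hN1.le
    have e3 : q ^ (-((N:ℝ) * r - n - k0 - 1)) =
        q ^ ((n:ℝ) + k0 + 1 + r) * q ^ (-((N:ℝ)+1) * r) := by
      rw [← Real.rpow_add q0]; congr 1; ring
    calc _ ≤ _ := hclose
      _ ≤ _ := e1
      _ = _ := e3
      _ ≤ _ := mul_le_mul_of_nonneg_left e2 (Real.rpow_nonneg q0.le _)
  rw [edist_dist, edist_dist, Real.dist_eq, ENNReal.ofReal_rpow_of_nonneg hpos.le r.coe_nonneg]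
  show _ ≤ ENNReal.ofReal (q ^ ((n:ℝ) + k0 + 1 + r)) * _
  rw [← ENNReal.ofReal_mul (Real.rpow_nonneg q0.le _)]
  exact ENNReal.ofReal_le_ofReal hreal

lemma fmap_surj (hinf : (Set.ofPred (freeP hn d ix)).Infinite) (hdi : Function.Injective d)
    (y : ℕ → Fin n → Polynomial K) (hdeg : ∀ k i, (y k i).natDegree ≤ d k)
    (hc : ∀ k, (y k (ix k)).coeff (d k) ≠ 0) :
    Set.Icc (0:ℝ) 1 ⊆ fmap hn d ix '' {θ : Fin n → FF K | (∀ i, fnorm (θ i) < 1) ∧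
      ∀ k, cf (∑ i, polyF (y k i) * θ i) 1 = 1} := by
  intro t ht
  obtain ⟨e, -, he⟩ := Real.ofDigits_SurjOn (b := Fintype.card K) Fintype.one_lt_card ht
  obtain ⟨D, hD1, hD2⟩ := exists_digits d hdi ix (fun k i a => (y k i).coeff a) hc
    (fun N i => (Fintype.equivFin K).symm (e (Nat.count (freeP hn d ix) (N * n + i))))
  choose θ hθ1 hθ2 using fun i => exists_FF (fun a => D a i)
  refine ⟨θ, ⟨hθ1, ?_⟩, ?_⟩
  · intro k
    rw [cf_sum, ← hD2 k]
    refine Finset.sum_congr rfl fun i _ => ?_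
    rw [cf_polyF_mul _ _ _ (Nat.lt_succ_of_le (hdeg k i))]
    refine Finset.sum_congr rfl fun a _ => ?_
    rw [add_comm, hθ2]
  · rw [← he]
    unfold fmap
    congr 1
    funext j
    have hmem : freeP hn d ix (Nat.nth (freeP hn d ix) j) := Nat.nth_mem_of_infinite hinf j
    rw [hθ2, hD1 _ _ hmem, Equiv.apply_symm_apply]
    congr 1
    have : Nat.nth (freeP hn d ix) j / n * n + (colF hn (Nat.nth (freeP hn d ix) j) : ℕ) =
        Nat.nth (freeP hn d ix) j := by
      show _ / n * n + _ % n = _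
      rw [mul_comm]; exact Nat.div_add_mod _ n
    rw [this]
    exact Nat.count_nth_of_infinite hinf j

end count

lemma growth (hn : 0 < n) {A : Matrix (Fin n) (Fin m) (FF K)} {y : ℕ → Fin n → Polynomial K}
    (hy : IsBestApproxSeq A y)
    (hgrow : Filter.Tendsto (fun k : ℕ => pnorm (y k) ^ (1 / (k : ℝ)))
      Filter.atTop Filter.atTop) (C : ℕ) : ∃ k0, ∀ k, k0 ≤ k → C * k ≤ pdeg (y (k+1)) := by
  have : Nonempty (Fin n) := ⟨⟨0, hn⟩⟩
  obtain ⟨k0, hk0⟩ := Filter.eventually_atTop.mp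
    (hgrow.eventually (Filter.eventually_ge_atTop ((Fintype.card K : ℝ) ^ (C:ℝ))))
  refine ⟨k0, fun k hk => ?_⟩
  have h := hk0 (k+1) (by omega)
  rw [pnorm_eq (y_ne hn hy (k+1) (by omega)), ← Real.rpow_intCast, ← Real.rpow_mul q_pos.le,
    Real.rpow_le_rpow_left_iff one_lt_q] at h
  have hk1 : (0:ℝ) < ((k+1 : ℕ) : ℝ) := by positivity
  rw [mul_one_div, le_div_iff₀ hk1] at h
  have h' : C * (k+1) ≤ pdeg (y (k+1)) := by exact_mod_cast h
  nlinarith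

theorem main_aux {K : Type*} [Field K] [Fintype K] {m n : ℕ}
    (hm : 0 < m) (hn : 0 < n)
    (A : Matrix (Fin n) (Fin m) (FF K))
    (y : ℕ → Fin n → Polynomial K) (hy : IsBestApproxSeq A y)
    (hgrow : Filter.Tendsto (fun k : ℕ => pnorm (y k) ^ (1 / (k : ℝ)))
      Filter.atTop Filter.atTop) (ε : ℝ)
    (hε : ε < (Fintype.card K : ℝ) ^ (-(4 : ℝ) - (m : ℝ) / (n : ℝ))) :
      dimH (Bad A ε) = n := by
  have : Nonempty (Fin n) := ⟨⟨0, hn⟩⟩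
  apply le_antisymm
  · exact (dimH_mono (fun θ hθ => hθ.1)).trans dimH_unit_le
  choose! ix hix using fun k => exists_pdeg (y_ne hn hy (k+1) (by omega))
  set d : ℕ → ℕ := fun k => pdeg (y (k+1)) with hd
  have hmono : StrictMono d := strictMono_nat_of_lt_succ fun k => pdeg_lt hn hy (k+1) (by omega)
  have hinf : (Set.ofPred (freeP hn d ix)).Infinite := by
    obtain ⟨k0, hk0⟩ := growth hn hy hgrow 2
    exact free_infinite hn d ix k0 hk0
  set B : Set (Fin n → FF K) := {θ | (∀ i, fnorm (θ i) < 1) ∧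
      ∀ k, cf (∑ i, polyF (y (k+1) i) * θ i) 1 = 1} with hB
  have hBsub : B ⊆ Bad A ε := by
    intro θ hθ
    refine mem_Bad hm hn hy hε hθ.1 fun k hk => ?_
    have := hθ.2 (k-1)
    rw [Nat.sub_add_cancel hk] at this
    rw [this]; exact one_ne_zero
  have hsurj : Set.Icc (0:ℝ) 1 ⊆ fmap hn d ix '' B :=
    fmap_surj hn d ix hinf hmono.injective (fun k => y (k+1))
      (fun k i => natDegree_le_pdeg _ i) (fun k => by
        have h := hix k
        show (y (k+1) (ix k)).coeff (pdeg (y (k+1))) ≠ 0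
        rw [← h.2]
        exact Polynomial.leadingCoeff_ne_zero.mpr h.1)
  have h1 : (1:ℝ≥0∞) ≤ dimH (fmap hn d ix '' B) := by
    refine le_trans (le_of_eq ?_) (dimH_mono hsurj)
    have := Real.dimH_of_mem_nhds (E := ℝ) (x := 1/2) (s := Set.Icc 0 1)
      (Icc_mem_nhds (by norm_num) (by norm_num))
    rw [this]; simp
  have hCbound : ∀ C : ℕ, 2 ≤ C → ((n - 1 / C : ℝ≥0) : ℝ≥0∞) ≤ dimH (Bad A ε) := by
    intro C hC
    obtain ⟨k0, hk0⟩ := growth hn hy hgrow C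
    have hC1 : (1 / C : ℝ≥0) ≤ 1 / 2 := by
      apply one_div_le_one_div_of_le (by norm_num); exact_mod_cast hC
    have hn1 : (1 : ℝ≥0) ≤ n := by exact_mod_cast hn
    have hlt : (1 / C : ℝ≥0) < n := by
      refine lt_of_le_of_lt hC1 (lt_of_lt_of_le ?_ hn1)
      apply NNReal.half_lt_self; norm_num
    obtain ⟨B', hB'⟩ := fmap_holder (K := K) hn d ix C k0 hC hk0 (n - 1 / C : ℝ≥0) (by
      rw [NNReal.coe_sub hlt.le]; push_cast; rfl)
    have hr : (0 : ℝ≥0) < n - 1 / C := tsub_pos_of_lt hlt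
    have h2 := (hB'.mono (fun θ (hθ : θ ∈ B) => hθ.1)).dimH_image_le hr
    have h3 := h1.trans h2
    rw [ENNReal.le_div_iff_mul_le (Or.inl (by exact_mod_cast hr.ne')) (Or.inl ENNReal.coe_ne_top),
      one_mul] at h3
    exact h3.trans (dimH_mono hBsub)
  have hlim : Tendsto (fun C : ℕ => ((n - 1 / C : ℝ≥0) : ℝ≥0∞)) atTop (nhds (n : ℝ≥0∞)) := by
    have e : Tendsto (fun C : ℕ => (n - 1 / C : ℝ≥0)) atTop (nhds ((n : ℝ≥0) - 0)) :=
      tendsto_const_nhds.sub tendsto_one_div_atTop_nhds_zero_nat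
    rw [tsub_zero] at e
    have := ENNReal.tendsto_coe.mpr e
    simpa using this
  exact le_of_tendsto hlim (eventually_atTop.mpr ⟨2, hCbound⟩)

end FPSDA
/-- If the norms of the best approximation vectors `(y_k)_{k ≥ 1}` related to `Aᵀ` satisfy
`‖y_k‖^{1/k} → ∞`, then `Bad^ε(A)` has Hausdorff dimension `n` for every
`0 < ε < q^{-4 - m/n}`. -/
theorem dimH_Bad_of_rapid_growth {K : Type*} [Field K] [Fintype K] {m n : ℕ}
    (hm : 0 < m) (hn : 0 < n)
    (A : Matrix (Fin n) (Fin m) (FF K)) (hA : Nondegenerate A)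
    (y : ℕ → Fin n → Polynomial K) (hy : IsBestApproxSeq A y)
    (hgrow : Filter.Tendsto (fun k : ℕ => pnorm (y k) ^ (1 / (k : ℝ)))
      Filter.atTop Filter.atTop) :
    ∀ ε : ℝ, 0 < ε → ε < (Fintype.card K : ℝ) ^ (-(4 : ℝ) - (m : ℝ) / (n : ℝ)) →
      dimH (Bad A ε) = n := by
  intro ε _ hε
  exact FPSDA.main_aux hm hn A y hy hgrow ε hε
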